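/- Let D ⊆ Q be simple artinian k-algebras (D a k-subalgebra of Q). Then htr D ≤ htr Q, i.e., the injective dimension of D ⊗_k D^op as a left module over itself is at most the injective dimension of Q ⊗_k Q^op as a left module over itself. -/

import Mathlib

open CategoryTheory Limits TensorProduct

universe u

/-- The injective dimension of a module `M`, defined as the least `n : ℕ∞` for which
there is an injective resolution of `M` that vanishes in all cohomological degrees `> n`. -/
noncomputable def ModuleCat.injDim {R : Type u} [Ring R] (M : ModuleCat.{u} R) : ℕ∞ :=
  sInf {n : ℕ∞ | ∃ I : InjectiveResolution M, ∀ i : ℕ, n < (i : ℕ∞) → IsZero (I.cocomplex.X i)}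

/-- The projective dimension of a module `M`, defined as the least `n : ℕ∞` for which
there is a projective resolution of `M` that vanishes in all homological degrees `> n`. -/
noncomputable def ModuleCat.projDim {R : Type u} [Ring R] (M : ModuleCat.{u} R) : ℕ∞ :=
  sInf {n : ℕ∞ | ∃ P : ProjectiveResolution M, ∀ i : ℕ, n < (i : ℕ∞) → IsZero (P.complex.X i)}

/-- The injective dimension of a ring as a left module over itself. -/
noncomputable def Ring.selfInjDim (R : Type u) [Ring R] : ℕ∞ :=
  ModuleCat.injDim (ModuleCat.of R R)

/-- The left global dimension of a ring: the supremum of the projective dimensions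
of all left `R`-modules. -/
noncomputable def Ring.globalDim (R : Type u) [Ring R] : ℕ∞ :=
  ⨆ M : ModuleCat.{u} R, M.projDim

/-!
Let `D → Q` and `D' → Q'` be injective algebra maps with `D`, `D'` semisimple, and put
`A = D ⊗ D'`, `B = Q ⊗ Q'`. Over a semisimple ring every module is projective, so `Q` and `Q'` have
dual bases as right modules, and the products of these form one of `B` over `A`. Hence `B ⊗_A -` is
exact, i.e. restriction of scalars from `B` to `A` preserves injective modules, and so it does not
increase injective dimensions. Semisimplicity also splits `D → Q` and `D' → Q'` as maps of left
modules, so `A` is a direct summand of the left `A`-module `B`, and `B` has injective dimension over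
`A` at most that over `B`.
-/

universe v u₁ v₁ u₂ v₂

section Exact

variable {C : Type u₁} [Category.{v₁} C] [HasZeroMorphisms C]

theorem exact_comp_mono {S : ShortComplex C} (hS : S.Exact) {Y : C} (j : S.X₃ ⟶ Y) [Mono j] :
    (ShortComplex.mk S.f (S.g ≫ j) (by simp)).Exact := by
  let α : S ⟶ ShortComplex.mk S.f (S.g ≫ j) (by simp) := { τ₁ := 𝟙 _, τ₂ := 𝟙 _, τ₃ := j }
  have : Mono α.τ₃ := ‹Mono j›
  have : IsIso α.τ₂ := inferInstanceAs (IsIso (𝟙 _))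
  have : Epi α.τ₁ := inferInstanceAs (Epi (𝟙 _))
  exact (ShortComplex.exact_iff_of_epi_of_isIso_of_mono α).1 hS

theorem exact_epi_comp {S : ShortComplex C} (hS : S.Exact) {Y : C} (p : Y ⟶ S.X₁) [Epi p] :
    (ShortComplex.mk (p ≫ S.f) S.g (by simp)).Exact := by
  let α : ShortComplex.mk (p ≫ S.f) S.g (by simp) ⟶ S := { τ₁ := p, τ₂ := 𝟙 _, τ₃ := 𝟙 _ }
  have : Epi α.τ₁ := ‹Epi p›
  have : IsIso α.τ₂ := inferInstanceAs (IsIso (𝟙 _))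
  have : Mono α.τ₃ := inferInstanceAs (Mono (𝟙 _))
  exact (ShortComplex.exact_iff_of_epi_of_isIso_of_mono α).2 hS

end Exact

section InjectiveResolutions

variable {C : Type u₁} [Category.{v₁} C] [Abelian C]

/-- The injective resolution given by an exact sequence `0 ⟶ X ⟶ K⁰ ⟶ K¹ ⟶ ⋯` with injective `Kⁿ`,
the exactness being spelled out degree by degree instead of as a quasi-isomorphism. -/
noncomputable def injectiveResolutionOfExact {X : C} (K : CochainComplex C ℕ)
    (hK : ∀ n, Injective (K.X n)) (f : X ⟶ K.X 0) [Mono f] (w : f ≫ K.d 0 1 = 0)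
    (exact₀ : (ShortComplex.mk f (K.d 0 1) w).Exact) (exact_succ : ∀ n, K.ExactAt (n + 1)) :
    InjectiveResolution X where
  cocomplex := K
  injective := hK
  ι := (CochainComplex.fromSingle₀Equiv K X).symm ⟨f, w⟩
  quasiIso := ⟨fun
    | 0 => by
      rw [CochainComplex.quasiIsoAt₀_iff, ShortComplex.quasiIso_iff_of_zeros]
      · refine (ShortComplex.exact_and_mono_f_iff_of_iso ?_).2 ⟨exact₀, ‹Mono f›⟩
        exact ShortComplex.isoMk (Iso.refl _) (Iso.refl _) (Iso.refl _)
          ((Category.id_comp f).trans ((CochainComplex.fromSingle₀Equiv_symm_apply_f_zero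
            f w).symm.trans (Category.comp_id _).symm))
          ((Category.id_comp _).trans (Category.comp_id _).symm)
      · rfl
      · rfl
      · exact K.shape 0 0 (by simp)
    | n + 1 => (quasiIsoAt_iff_exactAt _ _ (CochainComplex.exactAt_succ_single_obj _ _)).2
      (exact_succ n)⟩

theorem exists_injectiveResolution_of_shortExact {S : ShortComplex C} (hS : S.ShortExact)
    [Injective S.X₂] (I : InjectiveResolution S.X₃) :
    ∃ J : InjectiveResolution S.X₁, ∀ n, Nonempty (J.cocomplex.X (n + 1) ≅ I.cocomplex.X n) := by
  let ε : S.X₃ ⟶ I.cocomplex.X 0 := I.ι.f 0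
  have : Mono ε := inferInstanceAs (Mono (I.ι.f 0))
  have hε : ε ≫ I.cocomplex.d 0 1 = 0 := I.ι_f_zero_comp_complex_d
  have w : (S.g ≫ ε) ≫ I.cocomplex.d 0 1 = 0 := by rw [Category.assoc, hε, comp_zero]
  let K := CochainComplex.augment I.cocomplex (S.g ≫ ε) w
  have exact_succ (n : ℕ) : K.ExactAt (n + 1) := by
    rw [HomologicalComplex.exactAt_iff' _ n (n + 1) (n + 2) (by simp) (by simp)]
    cases n with
    | zero =>
      let T := ShortComplex.mk ε (I.cocomplex.d 0 1) hε
      have : Epi (Y := T.X₁) S.g := hS.epi_g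
      exact exact_epi_comp (S := T) I.exact₀ S.g
    | succ n => exact I.exact_succ n
  have : Mono (Y := K.X 0) S.f := hS.mono_f
  refine ⟨injectiveResolutionOfExact K ?_ S.f _ (exact_comp_mono hS.exact ε) exact_succ,
    fun n => ⟨Iso.refl _⟩⟩
  rintro (_ | n)
  exacts [‹Injective S.X₂›, I.injective n]

theorem exists_injectiveResolution_isZero_iff_hasInjectiveDimensionLE [EnoughInjectives C]
    (M : C) (n : ℕ) :
    (∃ I : InjectiveResolution M, ∀ i, n < i → IsZero (I.cocomplex.X i)) ↔
      HasInjectiveDimensionLE M n := by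
  constructor
  · rintro ⟨I, hI⟩
    let := HasExt.standard C
    refine (hasInjectiveDimensionLT_iff M (n + 1)).2 fun i hi Y e => ?_
    obtain ⟨f, hf, rfl⟩ := I.extMk_surjective e (i + 1) rfl
    simp [(hI i hi).eq_zero_of_tgt f]
  · intro hM
    induction n generalizing M with
    | zero =>
      have : Injective M := injective_iff_hasInjectiveDimensionLT_one.2 hM
      exact ⟨InjectiveResolution.self M, fun i hi =>
        HomologicalComplex.isZero_single_obj_X _ _ _ _ hi.ne'⟩
    | succ n ih =>
      obtain ⟨P⟩ := EnoughInjectives.presentation M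
      have hS := P.shortExact_shortComplex
      have := P.injective
      obtain ⟨I, hI⟩ := ih _ ((hS.hasInjectiveDimensionLT_X₃_iff n P.injective).2 hM)
      obtain ⟨J, hJ⟩ := exists_injectiveResolution_of_shortExact hS I
      exact ⟨J, fun | i + 1, hi => (hI i (by lia)).of_iso (hJ i).some⟩

theorem hasInjectiveDimensionLE_obj [EnoughInjectives C]
    {D : Type u₂} [Category.{v₂} D] [Abelian D] (F : C ⥤ D) [F.Additive]
    [PreservesFiniteLimits F] [PreservesFiniteColimits F] [F.PreservesInjectiveObjects]
    (M : C) (n : ℕ) [hM : HasInjectiveDimensionLE M n] : HasInjectiveDimensionLE (F.obj M) n := by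
  induction n generalizing M with
  | zero =>
    have : Injective M := injective_iff_hasInjectiveDimensionLT_one.2 hM
    exact injective_iff_hasInjectiveDimensionLT_one.1 (F.injective_obj M)
  | succ n ih =>
    obtain ⟨P⟩ := EnoughInjectives.presentation M
    have hS := P.shortExact_shortComplex
    have hK := (hS.hasInjectiveDimensionLT_X₃_iff n P.injective).2 hM
    exact ((hS.map_of_exact F).hasInjectiveDimensionLT_X₃_iff n
      (F.injective_obj_of_injective P.injective)).1 (ih _)

end InjectiveResolutions

theorem injDim_le_natCast_iff {R : Type u} [Ring R] (M : ModuleCat.{u} R) (n : ℕ) :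
    M.injDim ≤ n ↔ HasInjectiveDimensionLE M n := by
  rw [← exists_injectiveResolution_isZero_iff_hasInjectiveDimensionLE]
  constructor
  · intro h
    obtain ⟨I, hI⟩ : M.injDim ∈ {m : ℕ∞ | ∃ I : InjectiveResolution M,
        ∀ i : ℕ, m < (i : ℕ∞) → IsZero (I.cocomplex.X i)} :=
      csInf_mem ⟨⊤, InjectiveResolution.of M, fun i hi => absurd hi not_top_lt⟩
    exact ⟨I, fun i hi => hI i (h.trans_lt (by exact_mod_cast hi))⟩
  · rintro ⟨I, hI⟩
    exact sInf_le ⟨I, fun i hi => hI i (by exact_mod_cast hi)⟩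

theorem injDim_le_injDim {R S : Type u} [Ring R] [Ring S] {M : ModuleCat.{u} R}
    {N : ModuleCat.{u} S}
    (h : ∀ n : ℕ, HasInjectiveDimensionLE N n → HasInjectiveDimensionLE M n) :
    M.injDim ≤ N.injDim := by
  refine le_of_forall_ge fun n hN => ?_
  cases n with
  | top => exact le_top
  | coe n => exact (injDim_le_natCast_iff M n).2 (h n ((injDim_le_natCast_iff N n).1 hN))

theorem injDim_le_of_retract {R : Type u} [Ring R] {M N : ModuleCat.{u} R} (r : Retract M N) :
    M.injDim ≤ N.injDim :=
  injDim_le_injDim fun n _ => r.hasInjectiveDimensionLT (n + 1)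

theorem exists_comp_eq_of_ker_le {R : Type u} [Ring R] {E : Type u} [AddCommGroup E] [Module R E]
    [Module.Injective R E] {M N : Type*} [AddCommGroup M] [Module R M] [AddCommGroup N] [Module R N]
    (p : M →ₗ[R] N) (q : M →ₗ[R] E) (h : LinearMap.ker p ≤ LinearMap.ker q) :
    ∃ r : N →ₗ[R] E, r ∘ₗ p = q := by
  obtain ⟨r, hr⟩ := Module.Injective.extension_property R E _ _
    ((LinearMap.ker p).liftQ p le_rfl)
    (LinearMap.ker_eq_bot.1 (Submodule.ker_liftQ_eq_bot _ _ _ le_rfl))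
    ((LinearMap.ker p).liftQ q h)
  exact ⟨r, LinearMap.ext fun x => LinearMap.congr_fun hr (Submodule.Quotient.mk x)⟩

/-- A dual basis of `B` as a right `A`-module through `φ : A →+* B`: its existence, for some `ι`,
says that `B` is a projective right `A`-module. The `ι`-indexed coordinate functions are
bundled into one map to `ι →₀ A`. -/
structure RightDualBasis {A B : Type*} [Ring A] [Ring B] (φ : A →+* B) (ι : Type*) where
  gen : ι → B
  coord : B →+ (ι →₀ A)
  coord_mul : ∀ x a i, coord (x * φ a) i = coord x i * a
  sum_coord : ∀ x, (coord x).sum (fun i a => gen i * φ a) = x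

namespace RightDualBasis

section Ring

variable {A B : Type*} [Ring A] [Ring B] {φ : A →+* B} {ι : Type*}

theorem smul_eq_sum (d : RightDualBasis φ ι) {M E : Type*} [AddCommGroup M] [Module A M]
    [AddCommGroup E] [Module B E] (g : M →ₛₗ[φ] E) (x : B) (m : M) :
    x • g m = (d.coord x).sum fun i a => d.gen i • g (a • m) := by
  conv_lhs => rw [← d.sum_coord x]
  simp only [Finsupp.sum, Finset.sum_smul, mul_smul, map_smulₛₗ]

-- With `p : B ⊗_A J → B` and `q : B ⊗_A J → E` induced by `φ` and `g`, this says
-- `ker p ≤ ker q`: the coordinates embed `B ⊗_A J` into `ι →₀ J`.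
theorem linearCombination_eq_zero (d : RightDualBasis φ ι) {E : Type*} [AddCommGroup E]
    [Module B E] {J : Ideal A} (g : J →ₛₗ[φ] E) {z : J →₀ B}
    (hz : Finsupp.linearCombination B (fun j : J => φ j) z = 0) :
    Finsupp.linearCombination B g z = 0 := by
  let coordJ : (J →₀ B) →+ (ι →₀ J) := Finsupp.liftAddHom fun j =>
    (Finsupp.mapRange.addMonoidHom (LinearMap.toSpanSingleton A J j).toAddMonoidHom).comp d.coord
  let evalJ : (ι →₀ J) →+ E := Finsupp.liftAddHom fun i =>
    (DistribSMul.toAddMonoidHom E (d.gen i)).comp g.toAddMonoidHom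
  have eval_coord : evalJ.comp coordJ = (Finsupp.linearCombination B g).toAddMonoidHom := by
    ext j x
    refine Eq.trans ?_ ((d.smul_eq_sum g x j).symm.trans (by simp))
    simp [evalJ, coordJ, Finsupp.sum_mapRange_index]
  have coe_coord (w : J →₀ B) (i : ι) : (coordJ w i : A) =
      d.coord (Finsupp.linearCombination B (fun j : J => φ j) w) i := by
    induction w using Finsupp.induction_linear with
    | zero => simp
    | add v w hv hw => simp [hv, hw]
    | single j x => simp [coordJ, d.coord_mul]
  have coord_eq_zero : coordJ z = 0 := by
    ext i
    simp [coe_coord, hz]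
  simpa [coord_eq_zero] using (DFunLike.congr_fun eval_coord z).symm

theorem nonempty_of_isSemisimpleRing [IsSemisimpleRing A] (φ : A →+* B) :
    Nonempty (RightDualBasis φ B) := by
  let : Module Aᵐᵒᵖ B := Module.compHom B φ.op
  have smul_def (a : A) (x : B) : MulOpposite.op a • x = x * φ a := rfl
  obtain ⟨s, hs⟩ := (Module.projective_of_isSemisimpleRing Aᵐᵒᵖ B).out
  exact ⟨{
    gen := id
    coord := (Finsupp.mapRange.addMonoidHom MulOpposite.opAddEquiv.symm.toAddMonoidHom).comp
      s.toAddMonoidHom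
    coord_mul := fun x a i => by simp [← smul_def]
    sum_coord := fun x => by
      refine Eq.trans ?_ (hs x)
      exact Finsupp.sum_mapRange_index (hf := map_zero _) fun i => by simp }⟩

end Ring

section Injective

variable {A B : Type u} [Ring A] [Ring B] {φ : A →+* B} {ι : Type*}

theorem exists_forall_apply_eq (d : RightDualBasis φ ι) {E : Type u} [AddCommGroup E]
    [Module B E] [Module.Injective B E] {J : Ideal A} (g : J →ₛₗ[φ] E) :
    ∃ h : A →ₛₗ[φ] E, ∀ j : J, h j = g j := by
  obtain ⟨r, hr⟩ := exists_comp_eq_of_ker_le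
    (Finsupp.linearCombination B fun j : J => φ j) (Finsupp.linearCombination B g)
    fun _ => d.linearCombination_eq_zero g
  refine ⟨r.comp φ.toSemilinearMap, fun j => ?_⟩
  simpa using LinearMap.congr_fun hr (Finsupp.single j 1)

theorem preservesInjectiveObjects_restrictScalars (d : RightDualBasis φ ι) :
    (ModuleCat.restrictScalars.{u} φ).PreservesInjectiveObjects where
  injective_obj {X} hX := by
    have : Module.Injective B X := (Module.injective_iff_injective_object B X).2 hX
    let Y := (ModuleCat.restrictScalars φ).obj X
    have baer : Module.Baer A Y := fun J g => by
      obtain ⟨h, hh⟩ := d.exists_forall_apply_eq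
        ((ModuleCat.semilinearMapAddEquiv φ (ModuleCat.of A J) X).symm (ModuleCat.ofHom (Y := Y) g))
      exact ⟨(ModuleCat.semilinearMapAddEquiv φ (ModuleCat.of A A) X h).hom, fun x hx => hh ⟨x, hx⟩⟩
    exact (Module.injective_iff_injective_object A Y).1 baer.injective

theorem injDim_restrictScalars_le (d : RightDualBasis φ ι) (M : ModuleCat.{u} B) :
    ((ModuleCat.restrictScalars φ).obj M).injDim ≤ M.injDim := by
  have := d.preservesInjectiveObjects_restrictScalars
  have : PreservesFiniteLimits (ModuleCat.restrictScalars.{u} φ) := ⟨fun _ _ _ => ⟨inferInstance⟩⟩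
  exact injDim_le_injDim fun n _ => hasInjectiveDimensionLE_obj _ M n

end Injective

section Algebra

variable {k : Type*} [CommRing k] {D D' Q Q' : Type*} [Ring D] [Ring D'] [Ring Q] [Ring Q']
  [Algebra k D] [Algebra k D'] [Algebra k Q] [Algebra k Q']
  {f : D →ₐ[k] Q} {g : D' →ₐ[k] Q'} {ι κ : Type*}

/-- The coordinates as a `k`-linear map, when `f` is a map of `k`-algebras. -/
noncomputable def coordLinear (d : RightDualBasis (f : D →+* Q) ι) : Q →ₗ[k] ι →₀ D where
  __ := d.coord
  map_smul' c x := by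
    have smul_eq : c • x = x * f (algebraMap k D c) := by simp [Algebra.smul_def, Algebra.commutes]
    ext i
    simpa [smul_eq, Algebra.smul_def, Algebra.commutes] using d.coord_mul x (algebraMap k D c) i

theorem sum_finsuppTensorFinsupp_tmul (b : ι → Q) (b' : κ → Q') (s : ι →₀ D) (t : κ →₀ D') :
    (finsuppTensorFinsupp k k D D' ι κ (s ⊗ₜ t)).sum
        (fun i a => (b i.1 ⊗ₜ b' i.2) * Algebra.TensorProduct.map f g a) =
      (s.sum fun i a => b i * f a) ⊗ₜ[k] (t.sum fun i a => b' i * g a) := by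
  have sum_add (z w : ι × κ →₀ D ⊗[k] D') :
      (z + w).sum (fun i a => (b i.1 ⊗ₜ b' i.2) * Algebra.TensorProduct.map f g a) =
        z.sum (fun i a => (b i.1 ⊗ₜ b' i.2) * Algebra.TensorProduct.map f g a) +
          w.sum fun i a => (b i.1 ⊗ₜ b' i.2) * Algebra.TensorProduct.map f g a :=
    Finsupp.sum_add_index' (by simp) (by simp [mul_add])
  induction s using Finsupp.induction_linear with
  | zero => simp
  | add s s' hs hs' =>
    rw [add_tmul, map_add, sum_add, hs, hs', ← add_tmul,
      Finsupp.sum_add_index' (by simp) (by simp [mul_add])]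
  | single i a =>
    induction t using Finsupp.induction_linear with
    | zero => simp
    | add t t' ht ht' =>
      rw [tmul_add, map_add, sum_add, ht, ht', ← tmul_add,
        Finsupp.sum_add_index' (by simp) (by simp [mul_add])]
    | single j c => simp

/-- The products of the generators form a dual basis of `Q ⊗ Q'` over `D ⊗ D'`. -/
noncomputable def tensorProduct (d : RightDualBasis (f : D →+* Q) ι)
    (d' : RightDualBasis (g : D' →+* Q') κ) :
    RightDualBasis (Algebra.TensorProduct.map f g : D ⊗[k] D' →+* Q ⊗[k] Q') (ι × κ) where
  gen i := d.gen i.1 ⊗ₜ d'.gen i.2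
  coord := ((finsuppTensorFinsupp k k D D' ι κ).toLinearMap ∘ₗ
    TensorProduct.map d.coordLinear d'.coordLinear).toAddMonoidHom
  coord_mul x a i := by
    induction x with
    | zero => simp
    | add x y hx hy => simp_all [add_mul]
    | tmul x y =>
      induction a with
      | zero => simp
      | add a b ha hb => simp_all [mul_add]
      | tmul a c =>
        obtain ⟨i, j⟩ := i
        have hd : d.coordLinear (x * f a) i = d.coordLinear x i * a := d.coord_mul x a i
        have hd' : d'.coordLinear (y * g c) j = d'.coordLinear y j * c := d'.coord_mul y c j
        simp [hd, hd']
  sum_coord x := by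
    induction x with
    | zero => simp
    | add x y hx hy =>
      rw [map_add, Finsupp.sum_add_index' (by simp) (by simp [mul_add]), hx, hy]
    | tmul x y =>
      exact (sum_finsuppTensorFinsupp_tmul d.gen d'.gen (d.coord x) (d'.coord y)).trans
        (congrArg₂ _ (d.sum_coord x) (d'.sum_coord y))

end Algebra

end RightDualBasis

/-- A left `A`-linear retraction of `φ : A →+* B`; it makes `A` a direct summand of the left
`A`-module `B`. -/
structure LeftRetraction {A B : Type*} [Ring A] [Ring B] (φ : A →+* B) where
  proj : B →+ A
  proj_mul : ∀ a x, proj (φ a * x) = a * proj x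
  proj_one : proj 1 = 1

namespace LeftRetraction

theorem nonempty_of_isSemisimpleRing {A B : Type*} [Ring A] [Ring B] [IsSemisimpleRing A]
    {φ : A →+* B} (hφ : Function.Injective φ) : Nonempty (LeftRetraction φ) := by
  let : Module A B := Module.compHom B φ
  let incl : A →ₗ[A] B := { φ with map_smul' := map_mul φ }
  obtain ⟨p, hp⟩ := IsSemisimpleModule.extension_property incl hφ LinearMap.id
  exact ⟨{
    proj := p.toAddMonoidHom
    proj_mul := map_smul p
    proj_one := by simpa [incl] using LinearMap.congr_fun hp 1 }⟩

/-- The direct summand `A` of `B`, in the category of left `A`-modules. -/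
noncomputable def retract {A B : Type u} [Ring A] [Ring B] {φ : A →+* B} (p : LeftRetraction φ) :
    Retract (ModuleCat.of A A) ((ModuleCat.restrictScalars.{u} φ).obj (ModuleCat.of B B)) where
  i := ModuleCat.ofHom (Y := (ModuleCat.restrictScalars φ).obj (ModuleCat.of B B))
    { φ with map_smul' := map_mul φ }
  r := ModuleCat.ofHom (X := (ModuleCat.restrictScalars φ).obj (ModuleCat.of B B))
    { p.proj with map_smul' := p.proj_mul }
  retract := by
    ext
    exact (congrArg p.proj (map_one φ)).trans p.proj_one

section Algebra

variable {k : Type*} [CommRing k] {D D' Q Q' : Type*} [Ring D] [Ring D'] [Ring Q] [Ring Q']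
  [Algebra k D] [Algebra k D'] [Algebra k Q] [Algebra k Q'] {f : D →ₐ[k] Q} {g : D' →ₐ[k] Q'}

/-- The retraction as a `k`-linear map, when `f` is a map of `k`-algebras. -/
def projLinear (p : LeftRetraction (f : D →+* Q)) : Q →ₗ[k] D where
  __ := p.proj
  map_smul' c x := by simpa [Algebra.smul_def] using p.proj_mul (algebraMap k D c) x

/-- The tensor product of two left linear retractions. -/
noncomputable def tensorProduct (p : LeftRetraction (f : D →+* Q))
    (q : LeftRetraction (g : D' →+* Q')) :
    LeftRetraction (Algebra.TensorProduct.map f g : D ⊗[k] D' →+* Q ⊗[k] Q') where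
  proj := (TensorProduct.map p.projLinear q.projLinear).toAddMonoidHom
  proj_mul a x := by
    induction x with
    | zero => simp
    | add x y hx hy => simp_all [mul_add]
    | tmul x y =>
      induction a with
      | zero => simp
      | add a b ha hb => simp_all [add_mul]
      | tmul a c =>
        have hp : p.projLinear (f a * x) = a * p.projLinear x := p.proj_mul a x
        have hq : q.projLinear (g c * y) = c * q.projLinear y := q.proj_mul c y
        simp [hp, hq]
  proj_one := congrArg₂ (· ⊗ₜ[k] ·) p.proj_one q.proj_one

end Algebra

end LeftRetraction

theorem selfInjDim_le_of_rightDualBasis_of_leftRetraction {A B : Type u} [Ring A] [Ring B]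
    {φ : A →+* B} {ι : Type*} (d : RightDualBasis φ ι) (p : LeftRetraction φ) :
    Ring.selfInjDim A ≤ Ring.selfInjDim B :=
  (injDim_le_of_retract p.retract).trans (d.injDim_restrictScalars_le _)

theorem stmt_3_general {k : Type v} [CommRing k] {D D' Q Q' : Type u} [Ring D] [Ring D'] [Ring Q]
    [Ring Q'] [Algebra k D] [Algebra k D'] [Algebra k Q] [Algebra k Q'] [IsSemisimpleRing D]
    [IsSemisimpleRing D'] (f : D →ₐ[k] Q) (hf : Function.Injective f) (g : D' →ₐ[k] Q')
    (hg : Function.Injective g) :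
    Ring.selfInjDim (D ⊗[k] D') ≤ Ring.selfInjDim (Q ⊗[k] Q') := by
  obtain ⟨d⟩ := RightDualBasis.nonempty_of_isSemisimpleRing (f : D →+* Q)
  obtain ⟨d'⟩ := RightDualBasis.nonempty_of_isSemisimpleRing (g : D' →+* Q')
  obtain ⟨p⟩ := LeftRetraction.nonempty_of_isSemisimpleRing (φ := (f : D →+* Q)) hf
  obtain ⟨q⟩ := LeftRetraction.nonempty_of_isSemisimpleRing (φ := (g : D' →+* Q')) hg
  exact selfInjDim_le_of_rightDualBasis_of_leftRetraction (d.tensorProduct d') (p.tensorProduct q)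

/-!
Statement 3 (Proposition 1.5(a)): if `D ⊆ Q` are simple artinian `k`-algebras then
`htr D ≤ htr Q`, where `htr A` is the injective dimension of `A ⊗[k] Aᵐᵒᵖ` as a left
module over itself.
-/

theorem stmt_3 (k : Type u) [Field k] (D Q : Type u) [Ring D] [Ring Q]
    [Algebra k D] [Algebra k Q]
    [IsSimpleRing D] [IsArtinianRing D] [IsSimpleRing Q] [IsArtinianRing Q]
    (f : D →ₐ[k] Q) (hf : Function.Injective f) :
    Ring.selfInjDim (D ⊗[k] Dᵐᵒᵖ) ≤ Ring.selfInjDim (Q ⊗[k] Qᵐᵒᵖ) :=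
  stmt_3_general f hf (AlgHom.op f) (MulOpposite.op_injective.comp <|
    hf.comp MulOpposite.unop_injective)
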